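/- arXiv:math/0507435 — 3 statements merged into one kernel-verified Lean document; each statement's English description precedes it below -/
import Mathlib

section
/- Let g ∈ SL(n,ℂ) be such that δ^(s)_{1,…,s}(g) ≠ 0 for every s = 1,…,n−1. Then there exists an upper triangular matrix u with all diagonal entries equal to 1 such that g = g′·u, where g′ is the lower triangular matrix whose entries are g′_{jk} = δ^(k)_{1,…,k−1,j}(g)/δ^(k−1)_{1,…,k−1}(g) for all 1 ≤ k ≤ j ≤ n, and g′_{jk} = 0 for j < k. -/
open Matrix

/-- `leadingMinor g s` is `δ^(s)_{1,…,s}(g)`, the determinant of the top-left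
`s × s` submatrix of `g` (for `s ≤ n`).  For `s = 0` this is `1`. -/
noncomputable def leadingMinor {n : ℕ} (g : Matrix (Fin n) (Fin n) ℂ) (s : ℕ) : ℂ :=
  (Matrix.of fun k l : Fin (min s n) =>
    g (Fin.castLE (min_le_right s n) k) (Fin.castLE (min_le_right s n) l)).det

/-- `deltaCorner g k j` is `δ^(k)_{1,…,k−1,j}(g)`: the determinant of the
`k × k` matrix whose rows are the rows `1, …, k−1` of `g` followed by row `j`,
and whose columns are the first `k` columns of `g` (for `k ≤ n`; 0-based,
row index `a` with `a + 1 < k` gives row `a`, the last row is row `j`). -/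
noncomputable def deltaCorner {n : ℕ} (g : Matrix (Fin n) (Fin n) ℂ) (k : ℕ) (j : Fin n) : ℂ :=
  (Matrix.of fun a b : Fin (min k n) =>
    g (if (a : ℕ) + 1 < k then Fin.castLE (min_le_right k n) a else j)
      (Fin.castLE (min_le_right k n) b)).det

theorem deltaCorner_eq {n : ℕ} (g : Matrix (Fin n) (Fin n) ℂ) (k : ℕ) (h : k + 1 ≤ n) (j : Fin n) :
    deltaCorner g (k + 1) j = (Matrix.of fun a b : Fin (k + 1) =>
      g (if (a : ℕ) + 1 < k + 1 then Fin.castLE h a else j) (Fin.castLE h b)).det := by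
  have key : ∀ (m : ℕ) (hm : m ≤ n) (_ : m = k + 1), (Matrix.of fun a b : Fin m =>
      g (if (a : ℕ) + 1 < k + 1 then Fin.castLE hm a else j) (Fin.castLE hm b)).det =
      (Matrix.of fun a b : Fin (k + 1) =>
      g (if (a : ℕ) + 1 < k + 1 then Fin.castLE h a else j) (Fin.castLE h b)).det := by
    intro m hm e
    subst e
    rfl
  exact key _ (min_le_right _ _) (min_eq_left h)

theorem leadingMinor_eq {n : ℕ} (g : Matrix (Fin n) (Fin n) ℂ) (k : ℕ) (h : k ≤ n) :
    leadingMinor g k = (Matrix.of fun a b : Fin k =>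
      g (Fin.castLE h a) (Fin.castLE h b)).det := by
  have key : ∀ (m : ℕ) (hm : m ≤ n) (_ : m = k), (Matrix.of fun a b : Fin m =>
      g (Fin.castLE hm a) (Fin.castLE hm b)).det =
      (Matrix.of fun a b : Fin k => g (Fin.castLE h a) (Fin.castLE h b)).det := by
    intro m hm e
    subst e
    rfl
  exact key _ (min_le_right _ _) (min_eq_left h)

theorem deltaCorner_zero {n : ℕ} (g : Matrix (Fin n) (Fin n) ℂ) (k j : Fin n) (hjk : j < k) :
    deltaCorner g (k + 1) j = 0 := by
  rw [deltaCorner_eq g k k.2 j]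
  have hjk' : (j : ℕ) < k := hjk
  apply Matrix.det_zero_of_row_eq (i := (⟨j, by omega⟩ : Fin (k + 1))) (j := Fin.last k)
  · intro h
    have := congrArg Fin.val h
    simp at this
    omega
  · ext b
    simp

/-- Expansion of the corner minor along its last row. -/
theorem corner_expand {n : ℕ} (g : Matrix (Fin n) (Fin n) ℂ) (k : Fin n) :
    ∃ v : Fin n → ℂ, v k = leadingMinor g k ∧ (∀ l, k < l → v l = 0) ∧
      ∀ j, deltaCorner g (k + 1) j = ∑ l, g j l * v l := by
  have h : (k : ℕ) + 1 ≤ n := k.2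
  let c : Fin (k + 1) → ℂ := fun b => (-1) ^ ((k : ℕ) + (b : ℕ)) *
    (Matrix.of fun a l : Fin k =>
      g (Fin.castLE k.2.le a) (Fin.castLE h (b.succAbove l))).det
  refine ⟨fun l => ∑ b : Fin (k + 1), if Fin.castLE h b = l then c b else 0, ?_, ?_, ?_⟩
  · have e : ∀ b : Fin (k + 1), (Fin.castLE h b = k) ↔ b = Fin.last k := by
      intro b
      simp [Fin.ext_iff]
    simp only [e, Finset.sum_ite_eq', Finset.mem_univ, if_true]
    rw [leadingMinor_eq g k k.2.le]
    simp only [c, Fin.val_last, Fin.succAbove_last, Even.neg_one_pow ⟨(k : ℕ), rfl⟩, one_mul]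
    rfl
  · intro l hl
    apply Finset.sum_eq_zero
    intro b _
    rw [if_neg]
    intro e
    have := congrArg Fin.val e
    have h2 : (k : ℕ) < l := hl
    simp at this
    omega
  · intro j
    rw [deltaCorner_eq g k h j, Matrix.det_succ_row _ (Fin.last _)]
    simp only [Finset.mul_sum]
    rw [Finset.sum_comm]
    apply Finset.sum_congr rfl
    intro b _
    simp only [mul_ite, mul_zero, Finset.sum_ite_eq, Finset.mem_univ, if_true, c]
    have e : (Matrix.of fun a b : Fin (k + 1) =>
        g (if (a : ℕ) + 1 < k + 1 then Fin.castLE h a else j) (Fin.castLE h b)).submatrix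
        (Fin.last (k : ℕ)).succAbove b.succAbove = Matrix.of fun a l : Fin k =>
        g (Fin.castLE k.2.le a) (Fin.castLE h (b.succAbove l)) := by
      ext a l
      simp
    rw [e]
    simp
    ring

/-- Gauss decomposition, lower triangular form: if `g ∈ SL(n, ℂ)` has all
leading principal minors `δ^(s)_{1,…,s}(g) ≠ 0` for `s = 1, …, n − 1`, then
`g = g′ · u` with `u` upper triangular with unit diagonal and `g′` the lower
triangular matrix with entries
`g′_{jk} = δ^(k)_{1,…,k−1,j}(g)/δ^(k−1)_{1,…,k−1}(g)` for `k ≤ j` and `0`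
otherwise.  (0-based indices: `jj, kk` correspond to `j = jj + 1`,
`k = kk + 1`.) -/
theorem gauss_lower_decomposition (n : ℕ) (g : Matrix.SpecialLinearGroup (Fin n) ℂ)
    (hg : ∀ s : ℕ, 1 ≤ s → s ≤ n - 1 →
      leadingMinor (g : Matrix (Fin n) (Fin n) ℂ) s ≠ 0) :
    ∃ u : Matrix (Fin n) (Fin n) ℂ,
      (∀ k, u k k = 1) ∧ (∀ k l : Fin n, l < k → u k l = 0) ∧
      (g : Matrix (Fin n) (Fin n) ℂ) =
        (Matrix.of fun jj kk : Fin n =>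
          if (kk : ℕ) ≤ (jj : ℕ) then
            deltaCorner (g : Matrix (Fin n) (Fin n) ℂ) ((kk : ℕ) + 1) jj /
              leadingMinor (g : Matrix (Fin n) (Fin n) ℂ) (kk : ℕ)
          else 0) * u := by
  have hL : ∀ k : Fin n, leadingMinor (g : Matrix (Fin n) (Fin n) ℂ) k ≠ 0 := by
    intro k
    by_cases hk : (k : ℕ) = 0
    · rw [leadingMinor_eq _ _ k.2.le]
      have : IsEmpty (Fin (k : ℕ)) := by rw [hk]; infer_instance
      simp
    · exact hg k (by omega) (by omega)
  choose v hv1 hv2 hv3 using corner_expand (g : Matrix (Fin n) (Fin n) ℂ)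
  let V : Matrix (Fin n) (Fin n) ℂ := Matrix.of fun l k =>
    v k l / leadingMinor (g : Matrix (Fin n) (Fin n) ℂ) k
  have hVd : ∀ k, V k k = 1 := fun k => by
    simp only [V, Matrix.of_apply, hv1]
    exact div_self (hL k)
  have hVt : V.BlockTriangular id := fun l k hkl => by
    simp only [V, Matrix.of_apply]
    rw [hv2 k l hkl, zero_div]
  have hdet : V.det = 1 := by
    rw [Matrix.det_of_upperTriangular hVt]
    simp [hVd]
  have hu : IsUnit V.det := by simp [hdet]
  have : Invertible V := Matrix.invertibleOfIsUnitDet V hu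
  have hWt : V⁻¹.BlockTriangular id := Matrix.blockTriangular_inv_of_blockTriangular hVt
  refine ⟨V⁻¹, ?_, fun k l h => hWt h, ?_⟩
  · intro k
    have h1 : (V * V⁻¹) k k = 1 := by
      rw [Matrix.mul_nonsing_inv V hu, Matrix.one_apply_eq]
    rw [Matrix.mul_apply, Finset.sum_eq_single k, hVd, one_mul] at h1
    · exact h1
    · intro b _ hb
      rcases lt_or_gt_of_ne hb with h | h
      · rw [hVt h, zero_mul]
      · rw [hWt h, mul_zero]
    · simp
  · have hM : (Matrix.of fun jj kk : Fin n =>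
          if (kk : ℕ) ≤ (jj : ℕ) then
            deltaCorner (g : Matrix (Fin n) (Fin n) ℂ) ((kk : ℕ) + 1) jj /
              leadingMinor (g : Matrix (Fin n) (Fin n) ℂ) (kk : ℕ)
          else 0) = (g : Matrix (Fin n) (Fin n) ℂ) * V := by
      ext j k
      have h1 : ((g : Matrix (Fin n) (Fin n) ℂ) * V) j k =
          deltaCorner (g : Matrix (Fin n) (Fin n) ℂ) ((k : ℕ) + 1) j /
              leadingMinor (g : Matrix (Fin n) (Fin n) ℂ) (k : ℕ) := by
        rw [hv3, Matrix.mul_apply, Finset.sum_div]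
        simp only [V, Matrix.of_apply, mul_div_assoc]
      rw [h1, Matrix.of_apply]
      split_ifs with h
      · rfl
      · rw [deltaCorner_zero _ k j (by simpa using h), zero_div]
    rw [hM, Matrix.mul_assoc, Matrix.mul_nonsing_inv V hu, Matrix.mul_one]
end

section
/- Let f : SL(n,ℂ) → ℂ be the restriction to SL(n,ℂ) of a polynomial in the n² matrix entries, and suppose that f(ᵗn₁ · g · n₂) = f(g) for every g ∈ SL(n,ℂ) and all upper triangular matrices n₁, n₂ with unit diagonal. Then there exists a polynomial Φ ∈ ℂ[t₁,…,t_{n−1}] such that f(g) = Φ(δ^(1)_{1}(g), δ^(2)_{1,2}(g), …, δ^(n−1)_{1,…,n−1}(g)) for all g ∈ SL(n,ℂ). -/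
open Matrix

/-- Evaluation of a polynomial in the `n²` matrix entries at a matrix. -/
noncomputable def evalMat {n : ℕ} (F : MvPolynomial (Fin n × Fin n) ℂ)
    (M : Matrix (Fin n) (Fin n) ℂ) : ℂ :=
  MvPolynomial.eval (fun p => M p.1 p.2) F


/-- The leading `s × s` block. -/
def lead {n : ℕ} {R : Type*} (s : ℕ) (h : s ≤ n) (g : Matrix (Fin n) (Fin n) R) :
    Matrix (Fin s) (Fin s) R :=
  g.submatrix (Fin.castLE h) (Fin.castLE h)

lemma leadingMinor_eq_s3 {n : ℕ} (g : Matrix (Fin n) (Fin n) ℂ) (s : ℕ) (h : s ≤ n) :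
    leadingMinor g s = (lead s h g).det := by
  have aux : ∀ (m : ℕ) (hm : m ≤ n), m = s →
      (Matrix.of fun k l : Fin m => g (Fin.castLE hm k) (Fin.castLE hm l)).det
        = (lead s h g).det := by
    intro m hm e
    subst e
    rfl
  exact aux _ _ (min_eq_left h)

lemma lead_mul_lower {n : ℕ} (s : ℕ) (h : s ≤ n) (L g : Matrix (Fin n) (Fin n) ℂ)
    (hL : ∀ k l : Fin n, k < l → L k l = 0) :
    lead s h (L * g) = lead s h L * lead s h g := by
  ext i j
  simp only [lead, Matrix.submatrix_apply, Matrix.mul_apply]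
  symm
  apply Fintype.sum_of_injective (Fin.castLE h) (Fin.castLE_injective h)
  · intro x hx
    rw [hL, zero_mul]
    by_contra hlt
    apply hx
    have h1 : (x : ℕ) ≤ i := by
      rw [not_lt] at hlt
      exact hlt
    exact ⟨⟨x, lt_of_le_of_lt h1 i.2⟩, rfl⟩
  · intro i
    rfl

lemma lead_transpose {n : ℕ} (s : ℕ) (h : s ≤ n) (g : Matrix (Fin n) (Fin n) ℂ) :
    lead s h gᵀ = (lead s h g)ᵀ := rfl

lemma det_lead_lower {n : ℕ} (s : ℕ) (h : s ≤ n) (L : Matrix (Fin n) (Fin n) ℂ)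
    (hL1 : ∀ k, L k k = 1)
    (hL : ∀ k l : Fin n, k < l → L k l = 0) : (lead s h L).det = 1 := by
  rw [Matrix.det_of_isLowerTriangular]
  · simp [lead, hL1]
  · intro i j hij
    exact hL _ _ hij

lemma det_lead_mul {n : ℕ} (s : ℕ) (h : s ≤ n) (L g : Matrix (Fin n) (Fin n) ℂ)
    (hL1 : ∀ k, L k k = 1)
    (hL : ∀ k l : Fin n, k < l → L k l = 0) :
    (lead s h (L * g)).det = (lead s h g).det := by
  rw [lead_mul_lower s h L g hL, Matrix.det_mul, det_lead_lower s h L hL1 hL, one_mul]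

/-- Row elimination. -/
lemma exists_lower {n : ℕ} (g : Matrix (Fin n) (Fin n) ℂ)
    (hg : ∀ s (h : s ≤ n), (lead s h g).det ≠ 0) :
    ∃ L : Matrix (Fin n) (Fin n) ℂ, (∀ k, L k k = 1) ∧ (∀ k l : Fin n, k < l → L k l = 0) ∧
      ∀ k l : Fin n, l < k → (L * g) k l = 0 := by
  have key : ∀ k : Fin n, ∃ r : Fin n → ℂ, r k = 1 ∧ (∀ l, k < l → r l = 0) ∧
      ∀ l, l < k → (r ᵥ* g) l = 0 := by
    intro k
    have hk : (k : ℕ) ≤ n := k.2.le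
    let A := lead k hk g
    have hA : IsUnit A.det := (hg k hk).isUnit
    let v : Fin k → ℂ := (fun l => - g k (Fin.castLE hk l)) ᵥ* A⁻¹
    have hv : v ᵥ* A = fun l => - g k (Fin.castLE hk l) := by
      simp only [v, Matrix.vecMul_vecMul, Matrix.nonsing_inv_mul A hA, Matrix.vecMul_one]
    let w : Fin n → ℂ := fun l => if hl : (l : ℕ) < k then v ⟨l, hl⟩ else 0
    have hw : ∀ l, l < k → (w ᵥ* g) l = - g k l := by
      intro l hl
      have := congrFun hv ⟨l, hl⟩
      simp only [Matrix.vecMul, dotProduct] at this ⊢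
      rw [show - g k l = - g k (Fin.castLE hk ⟨l, hl⟩) from rfl, ← this]
      symm
      apply Fintype.sum_of_injective (Fin.castLE hk) (Fin.castLE_injective hk)
      · intro x hx
        have : ¬ ((x : ℕ) < k) := fun hlt => hx ⟨⟨x, hlt⟩, rfl⟩
        simp only [w, dif_neg this, zero_mul]
      · intro i
        have h5 : ((Fin.castLE hk i : Fin n) : ℕ) < k := i.2
        simp only [w, dif_pos h5]
        rfl
    refine ⟨w + Pi.single k 1, ?_, ?_, ?_⟩
    · simp [w]
    · intro l hl
      have h1 : ¬ ((l : ℕ) < k) := by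
        have : (k : ℕ) < l := hl
        omega
      simp only [w, Pi.add_apply, dif_neg h1, zero_add]
      exact Pi.single_eq_of_ne hl.ne' 1
    · intro l hl
      rw [Matrix.add_vecMul, Pi.add_apply, hw l hl]
      simp
  choose L h1 h2 h3 using key
  exact ⟨Matrix.of L, h1, h2, fun k l hl => h3 k l hl⟩

lemma exists_diag {n : ℕ} (g : Matrix (Fin n) (Fin n) ℂ)
    (hg : ∀ s (h : s ≤ n), (lead s h g).det ≠ 0) :
    ∃ (L U : Matrix (Fin n) (Fin n) ℂ) (d : Fin n → ℂ),
      (∀ k, L k k = 1) ∧ (∀ k l : Fin n, l < k → L k l = 0) ∧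
      (∀ k, U k k = 1) ∧ (∀ k l : Fin n, l < k → U k l = 0) ∧
      Lᵀ * g * U = Matrix.diagonal d ∧
      ∀ s (h : s ≤ n), ∏ i : Fin s, d (Fin.castLE h i) = (lead s h g).det := by
  obtain ⟨L, a1, a2, a3⟩ := exists_lower g hg
  have e1 : ∀ s (h : s ≤ n), (lead s h (L * g)ᵀ).det = (lead s h g).det := by
    intro s h
    rw [lead_transpose, Matrix.det_transpose, det_lead_mul s h L g a1 a2]
  obtain ⟨V, b1, b2, b3⟩ := exists_lower (L * g)ᵀ (fun s h => by rw [e1]; exact hg s h)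
  have hd : V * (L * g)ᵀ = Matrix.diagonal (fun i => (V * (L * g)ᵀ) i i) := by
    ext i j
    rcases lt_trichotomy i j with hij | hij | hij
    · rw [Matrix.diagonal_apply_ne _ hij.ne, Matrix.mul_apply]
      apply Finset.sum_eq_zero
      intro x _
      by_cases hx : i < x
      · rw [b2 i x hx, zero_mul]
      · rw [Matrix.transpose_apply, a3 j x (lt_of_le_of_lt (not_lt.1 hx) hij), mul_zero]
    · subst hij
      rw [Matrix.diagonal_apply_eq]
    · rw [Matrix.diagonal_apply_ne _ hij.ne', b3 i j hij]
  refine ⟨Lᵀ, Vᵀ, fun i => (V * (L * g)ᵀ) i i, a1, fun k l h => a2 l k h, b1,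
    fun k l h => b2 l k h, ?_, ?_⟩
  · have := congrArg Matrix.transpose hd
    rw [Matrix.diagonal_transpose, Matrix.transpose_mul, Matrix.transpose_transpose] at this
    rw [Matrix.transpose_transpose, this]
  · intro s h
    rw [← e1 s h, ← det_lead_mul s h V _ b1 b2, hd, lead,
      Matrix.submatrix_diagonal _ _ (Fin.castLE_injective h), Matrix.det_diagonal]
    simp

lemma diag_unique {n : ℕ} (d d' : Fin n → ℂ)
    (h0 : ∀ s (h : s ≤ n), ∏ i : Fin s, d (Fin.castLE h i) ≠ 0)
    (he : ∀ s (h : s ≤ n), ∏ i : Fin s, d (Fin.castLE h i) = ∏ i : Fin s, d' (Fin.castLE h i)) :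
    d = d' := by
  funext k
  have h1 := he (k + 1) k.2
  rw [Fin.prod_univ_castSucc, Fin.prod_univ_castSucc] at h1
  have h2 := he k k.2.le
  have h3 := h0 k k.2.le
  change (∏ i : Fin k, d (Fin.castLE k.2.le i)) * d k
    = (∏ i : Fin k, d' (Fin.castLE k.2.le i)) * d' k at h1
  rw [← h2] at h1
  exact mul_left_cancel₀ h3 h1

/-- The section of the leading minors. -/
def sec {R : Type*} [CommRing R] {n : ℕ} (t : Fin n → R) : Matrix (Fin n) (Fin n) R :=
  Matrix.of fun i j => if (i : ℕ) = 0 then t j else if (i : ℕ) = j + 1 then -1 else 0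

lemma det_sec {m : ℕ} (t : Fin (m + 1) → ℂ) : (sec t).det = t (Fin.last m) := by
  rw [Matrix.det_succ_column _ (Fin.last m), Finset.sum_eq_single 0]
  · have : (sec t).submatrix (Fin.succAbove 0) (Fin.succAbove (Fin.last m))
        = Matrix.diagonal (fun _ => (-1 : ℂ)) := by
      ext i j
      simp only [sec, Matrix.diagonal_apply, Matrix.submatrix_apply, Matrix.of_apply,
        Fin.succAbove_zero, Fin.succAbove_last, Fin.val_succ, Fin.val_castSucc,
        Nat.succ_ne_zero, if_false, Fin.ext_iff, add_left_inj]
    rw [this, Matrix.det_diagonal]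
    simp only [sec, Matrix.of_apply, Fin.val_zero, if_true, Fin.val_last, zero_add,
      Finset.prod_const, Finset.card_univ, Fintype.card_fin]
    rw [mul_right_comm, ← pow_add, Even.neg_one_pow ⟨m, rfl⟩, one_mul]
  · intro i _ hi
    have h1 : ¬ ((i : ℕ) = 0) := fun h => hi (Fin.ext h)
    have h2 : ¬ ((i : ℕ) = m + 1) := by have := i.2; omega
    have h3 : sec t i (Fin.last m) = 0 := by
      simp only [sec, Matrix.of_apply, if_neg h1, Fin.val_last, if_neg h2]
    rw [h3, mul_zero, zero_mul]
  · simp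

lemma det_lead_sec {n : ℕ} (t : Fin n → ℂ) (s : ℕ) (h : s + 1 ≤ n) :
    (lead (s + 1) h (sec t)).det = t ⟨s, h⟩ := by
  have : lead (s + 1) h (sec t) = sec (fun i => t (Fin.castLE h i)) := rfl
  rw [this, det_sec]
  rfl

lemma lead_self {n : ℕ} (h : n ≤ n) (g : Matrix (Fin n) (Fin n) ℂ) : lead n h g = g := rfl

/-- The vector of minors, completed by `1`. -/
def fullVec {R : Type*} [CommRing R] {m : ℕ} (t : Fin m → R) : Fin (m + 1) → R :=
  Fin.snoc (α := fun _ => R) t 1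

lemma generic_case {m : ℕ} (F : MvPolynomial (Fin (m + 1) × Fin (m + 1)) ℂ)
    (hF : ∀ (g : Matrix.SpecialLinearGroup (Fin (m + 1)) ℂ)
        (n₁ n₂ : Matrix (Fin (m + 1)) (Fin (m + 1)) ℂ),
      (∀ k, n₁ k k = 1) → (∀ k l, l < k → n₁ k l = 0) →
      (∀ k, n₂ k k = 1) → (∀ k l, l < k → n₂ k l = 0) →
      evalMat F (n₁ᵀ * (g : Matrix _ _ ℂ) * n₂) = evalMat F (g : Matrix _ _ ℂ))
    (g : Matrix (Fin (m + 1)) (Fin (m + 1)) ℂ) (hdet : g.det = 1)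
    (hg : ∀ s (h : s ≤ m + 1), (lead s h g).det ≠ 0) :
    evalMat F g = evalMat F (sec (fullVec fun s : Fin m => leadingMinor g ((s : ℕ) + 1))) := by
  set M := sec (fullVec fun s : Fin m => leadingMinor g ((s : ℕ) + 1)) with hM
  have hMs : ∀ s (h : s ≤ m + 1), (lead s h M).det = (lead s h g).det := by
    intro s h
    rcases s with _ | s
    · simp
    rw [hM, det_lead_sec]
    rcases Nat.lt_or_ge s m with hs | hs
    · have : (⟨s, h⟩ : Fin (m + 1)) = Fin.castSucc ⟨s, hs⟩ := rfl
      rw [this, fullVec, Fin.snoc_castSucc, leadingMinor_eq_s3 _ _ h]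
    · obtain rfl : s = m := by omega
      have : (⟨s, h⟩ : Fin (s + 1)) = Fin.last s := rfl
      rw [this, fullVec, Fin.snoc_last, lead_self, hdet]
  have hMdet : M.det = 1 := by
    have := hMs (m + 1) le_rfl
    rwa [lead_self, lead_self, hdet] at this
  obtain ⟨L, U, d, a1, a2, a3, a4, a5, a6⟩ := exists_diag g hg
  obtain ⟨L', U', d', b1, b2, b3, b4, b5, b6⟩ :=
    exists_diag M (fun s h => by rw [hMs]; exact hg s h)
  have hdd : d = d' := diag_unique d d' (fun s h => by rw [a6]; exact hg s h)
    (fun s h => by rw [a6, b6, hMs])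
  have c1 := hF ⟨g, hdet⟩ L U a1 a2 a3 a4
  have c2 := hF ⟨M, hMdet⟩ L' U' b1 b2 b3 b4
  change evalMat F (Lᵀ * g * U) = evalMat F g at c1
  change evalMat F (L'ᵀ * M * U') = evalMat F M at c2
  rw [← c1, ← c2, a5, b5, hdd]

lemma continuous_evalMat {n : ℕ} (F : MvPolynomial (Fin n × Fin n) ℂ) :
    Continuous (evalMat F) := by
  unfold evalMat
  have := MvPolynomial.continuous_eval F
  exact this.comp (by fun_prop)

lemma continuous_leadingMinor {n : ℕ} (s : ℕ) :
    Continuous (fun g : Matrix (Fin n) (Fin n) ℂ => leadingMinor g s) := by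
  unfold leadingMinor
  apply Continuous.matrix_det
  fun_prop

open Filter Topology in
lemma eventually_det {s : ℕ} (A : Matrix (Fin s) (Fin s) ℂ) :
    ∀ᶠ x in 𝓝[≠] (0 : ℂ), (A + x • (1 : Matrix (Fin s) (Fin s) ℂ)).det ≠ 0 := by
  have hne : (-A).charpoly ≠ 0 := (Matrix.charpoly_monic _).ne_zero
  have hfin : {x | (-A).charpoly.IsRoot x}.Finite := Polynomial.finite_setOfPred_isRoot hne
  have hmem : {x | (-A).charpoly.IsRoot x}ᶜ ∈ 𝓝[≠] (0 : ℂ) :=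
    nhdsNE_le_cofinite 0 hfin.compl_mem_cofinite
  filter_upwards [hmem] with x hx h0
  apply hx
  change Polynomial.eval x _ = 0
  rw [Matrix.eval_charpoly, ← h0]
  congr 1
  rw [sub_neg_eq_add, add_comm, Matrix.scalar_apply, Matrix.smul_one_eq_diagonal]

lemma tendsto_aux {n : ℕ} (E : Matrix (Fin n) (Fin n) ℂ → ℂ) (hE : Continuous E)
    (D P : ℂ → Matrix (Fin n) (Fin n) ℂ) (g : Matrix (Fin n) (Fin n) ℂ)
    (hD : ContinuousAt D 0) (hP : Continuous P) (hD0 : D 0 = 1) (hP0 : P 0 = g) :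
    Filter.Tendsto (fun x => E (D x * P x)) (nhdsWithin 0 {0}ᶜ) (nhds (E g)) := by
  have h1 : Filter.Tendsto (fun x => D x * P x) (nhds 0) (nhds (D 0 * P 0)) :=
    Filter.Tendsto.mul hD hP.continuousAt
  rw [hD0, hP0, one_mul] at h1
  exact ((hE.tendsto g).comp h1).mono_left nhdsWithin_le_nhds

/-- A polynomial function on `SL(n, ℂ)` which is invariant under
`g ↦ ᵗn₁ · g · n₂` for all upper triangular `n₁, n₂` with unit diagonal is a
polynomial in the leading principal minors `δ^(1)_1, …, δ^(n−1)_{1,…,n−1}`. -/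
theorem biinvariant_is_polynomial_in_leading_minors (n : ℕ)
    (F : MvPolynomial (Fin n × Fin n) ℂ)
    (hF : ∀ (g : Matrix.SpecialLinearGroup (Fin n) ℂ) (n₁ n₂ : Matrix (Fin n) (Fin n) ℂ),
      (∀ k, n₁ k k = 1) → (∀ k l : Fin n, l < k → n₁ k l = 0) →
      (∀ k, n₂ k k = 1) → (∀ k l : Fin n, l < k → n₂ k l = 0) →
      evalMat F (n₁ᵀ * (g : Matrix (Fin n) (Fin n) ℂ) * n₂) =
        evalMat F (g : Matrix (Fin n) (Fin n) ℂ)) :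
    ∃ Φ : MvPolynomial (Fin (n - 1)) ℂ,
      ∀ g : Matrix.SpecialLinearGroup (Fin n) ℂ,
        evalMat F (g : Matrix (Fin n) (Fin n) ℂ) =
          MvPolynomial.eval
            (fun s : Fin (n - 1) =>
              leadingMinor (g : Matrix (Fin n) (Fin n) ℂ) ((s : ℕ) + 1)) Φ := by
  rcases n with _ | m
  · refine ⟨MvPolynomial.C (evalMat F 0), fun g => ?_⟩
    rw [MvPolynomial.eval_C]
    congr 1
    exact Subsingleton.elim _ _
  let Φ : MvPolynomial (Fin m) ℂ :=
    MvPolynomial.bind₁ (fun p => sec (fullVec MvPolynomial.X) p.1 p.2) F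
  have hΦ : ∀ t : Fin m → ℂ, MvPolynomial.eval t Φ = evalMat F (sec (fullVec t)) := by
    intro t
    have h1 : ∀ p : Fin (m + 1) × Fin (m + 1), MvPolynomial.eval t
        (sec (fullVec (MvPolynomial.X : Fin m → MvPolynomial (Fin m) ℂ)) p.1 p.2)
          = sec (fullVec t) p.1 p.2 := by
      rintro ⟨i, j⟩
      have h2 : MvPolynomial.eval t
          (fullVec (MvPolynomial.X : Fin m → MvPolynomial (Fin m) ℂ) j) = fullVec t j := by
        refine Fin.lastCases ?_ (fun j => ?_) j
        · simp [fullVec]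
        · simp [fullVec]
      simp only [sec, Matrix.of_apply]
      split_ifs
      · exact h2
      · simp
      · simp
    have h3 := MvPolynomial.eval₂Hom_bind₁ (RingHom.id ℂ) t
      (fun p : Fin (m + 1) × Fin (m + 1) =>
        sec (fullVec (MvPolynomial.X : Fin m → MvPolynomial (Fin m) ℂ)) p.1 p.2) F
    refine h3.trans ?_
    have h4 : (fun p : Fin (m + 1) × Fin (m + 1) => sec (fullVec t) p.1 p.2)
      = fun p => MvPolynomial.eval t
        (sec (fullVec (MvPolynomial.X : Fin m → MvPolynomial (Fin m) ℂ)) p.1 p.2) :=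
      funext fun p => (h1 p).symm
    unfold evalMat
    rw [h4]
    rfl
  refine ⟨Φ, fun g => ?_⟩
  obtain ⟨g, hdet⟩ := g
  change evalMat F g = MvPolynomial.eval (fun s : Fin m => leadingMinor g ((s : ℕ) + 1)) Φ
  -- the perturbed matrices
  let P : ℂ → Matrix (Fin (m + 1)) (Fin (m + 1)) ℂ := fun x => g + x • 1
  let D : ℂ → Matrix (Fin (m + 1)) (Fin (m + 1)) ℂ := fun x =>
    Matrix.diagonal (fun i => if i = Fin.last m then (P x).det⁻¹ else 1)
  let E : Matrix (Fin (m + 1)) (Fin (m + 1)) ℂ → ℂ := fun h => evalMat F h -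
    MvPolynomial.eval (fun s : Fin m => leadingMinor h ((s : ℕ) + 1)) Φ
  have hE : Continuous E := by
    refine (continuous_evalMat F).sub ((MvPolynomial.continuous_eval Φ).comp ?_)
    exact continuous_pi fun s => continuous_leadingMinor _
  have hP0 : P 0 = g := by simp [P]
  have hPc : Continuous P := by fun_prop
  have hDc : ContinuousAt D 0 := by
    have h1 : ContinuousAt (fun x => (P x).det⁻¹) 0 := by
      apply ContinuousAt.inv₀
      · exact hPc.matrix_det.continuousAt
      · rw [hP0, hdet]
        exact one_ne_zero
    have h2 : Continuous (fun c : ℂ => (Matrix.diagonal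
        (fun i : Fin (m + 1) => if i = Fin.last m then c else 1))) := by
      apply Continuous.matrix_diagonal
      apply continuous_pi
      intro i
      split_ifs <;> fun_prop
    exact ContinuousAt.comp (g := fun c : ℂ => (Matrix.diagonal
        (fun i : Fin (m + 1) => if i = Fin.last m then c else 1))) h2.continuousAt h1
  have hD0 : D 0 = 1 := by
    simp [D, hP0, hdet]
  have hDP : Filter.Tendsto (fun x => E (D x * P x)) (nhdsWithin 0 {0}ᶜ) (nhds (E g)) := by
    exact tendsto_aux E hE D P g hDc hPc hD0 hP0
  have hev : ∀ᶠ x in nhdsWithin (0 : ℂ) {0}ᶜ, E (D x * P x) = 0 := by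
    have h1 : ∀ᶠ x in nhdsWithin (0 : ℂ) {0}ᶜ, ∀ s : Fin (m + 2),
        (lead s (Nat.lt_succ_iff.1 s.2) (P x)).det ≠ 0 := by
      rw [Filter.eventually_all]
      intro s
      filter_upwards [eventually_det (lead s (Nat.lt_succ_iff.1 s.2) g)] with x hx
      convert hx using 2
      ext i j
      simp [lead, P, Matrix.one_apply]
    filter_upwards [h1] with x hx
    have hx' : ∀ s (h : s ≤ m + 1), (lead s h (P x)).det ≠ 0 :=
      fun s h => hx ⟨s, Nat.lt_succ_iff.2 h⟩
    have hPx : (P x).det ≠ 0 := by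
      have := hx' (m + 1) le_rfl
      rwa [lead_self] at this
    have hdet1 : (D x * P x).det = 1 := by
      rw [Matrix.det_mul, Matrix.det_diagonal, Finset.prod_ite_eq' Finset.univ (Fin.last m)
        (fun _ => (P x).det⁻¹)]
      simp [hPx]
    have hlow : ∀ k l : Fin (m + 1), k < l → D x k l = 0 :=
      fun k l hkl => Matrix.diagonal_apply_ne _ hkl.ne
    have hlead : ∀ s (h : s ≤ m + 1), (lead s h (D x * P x)).det ≠ 0 := by
      intro s h
      rw [lead_mul_lower s h _ _ hlow, Matrix.det_mul]
      refine mul_ne_zero ?_ (hx' s h)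
      simp only [lead, D]
      rw [Matrix.submatrix_diagonal _ _ (Fin.castLE_injective h), Matrix.det_diagonal,
        Finset.prod_ne_zero_iff]
      intro i _
      simp only [Function.comp]
      split_ifs
      · exact inv_ne_zero hPx
      · exact one_ne_zero
    have := generic_case F hF (D x * P x) hdet1 hlead
    simp only [E]
    rw [this, hΦ, sub_self]
  have hlim : Filter.Tendsto (fun x => E (D x * P x)) (nhdsWithin 0 {0}ᶜ) (nhds 0) :=
    (tendsto_const_nhds).congr' (hev.mono fun x hx => hx.symm)
  exact sub_eq_zero.1 (tendsto_nhds_unique hDP hlim)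
end

section
/- The ℂ-algebra homomorphism φ : ℂ[X,Y,Z,U,E,W,V,A,C,D,B] → ℂ[x,y,z,u,v,w] determined by φ(X) = x, φ(Y) = y, φ(Z) = z, φ(U) = xy/2 + u, φ(E) = xy/2 − u, φ(V) = yz/2 + v, φ(W) = yz/2 − v, φ(A) = w + xv/2 + zu/2 + xyz/6, φ(C) = w − xv/2 − zu/2 + xyz/6, φ(D) = xyz/3 + xv/2 − zu/2 − w, φ(B) = xy²z/12 + uv − yw is surjective, and its kernel is the ideal generated by the ten elements U − XY + E, D − XV + A, B − UV + YA, XB − UD + AE, B − YD + EV, C − XW + UZ − A, VC − DW + BZ, W − YZ + V, C − EZ + D, YC − EW + B. Consequently the quotient of ℂ[X,Y,Z,U,E,W,V,A,C,D,B] by this ideal is isomorphic as a ℂ-algebra to the polynomial ring ℂ[x,y,z,u,v,w] in six variables. -/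
open MvPolynomial

/-- The homomorphism `φ : ℂ[X,Y,Z,U,E,W,V,A,C,D,B] → ℂ[x,y,z,u,v,w]`.
Source variables `X, Y, Z, U, E, W, V, A, C, D, B` are the indices
`0, …, 10` of `Fin 11`; target variables `x, y, z, u, v, w` are the indices
`0, …, 5` of `Fin 6`.  The values are
`φ(X) = x`, `φ(Y) = y`, `φ(Z) = z`, `φ(U) = xy/2 + u`, `φ(E) = xy/2 − u`,
`φ(W) = yz/2 − v`, `φ(V) = yz/2 + v`, `φ(A) = w + xv/2 + zu/2 + xyz/6`,
`φ(C) = w − xv/2 − zu/2 + xyz/6`, `φ(D) = xyz/3 + xv/2 − zu/2 − w`,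
`φ(B) = xy²z/12 + uv − yw`. -/
noncomputable def phiSl4 : MvPolynomial (Fin 11) ℂ →ₐ[ℂ] MvPolynomial (Fin 6) ℂ :=
  MvPolynomial.aeval
    ![X 0, X 1, X 2,
      C (2⁻¹ : ℂ) * (X 0 * X 1) + X 3,
      C (2⁻¹ : ℂ) * (X 0 * X 1) - X 3,
      C (2⁻¹ : ℂ) * (X 1 * X 2) - X 4,
      C (2⁻¹ : ℂ) * (X 1 * X 2) + X 4,
      X 5 + C (2⁻¹ : ℂ) * (X 0 * X 4) + C (2⁻¹ : ℂ) * (X 2 * X 3) +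
        C (6⁻¹ : ℂ) * (X 0 * X 1 * X 2),
      X 5 - C (2⁻¹ : ℂ) * (X 0 * X 4) - C (2⁻¹ : ℂ) * (X 2 * X 3) +
        C (6⁻¹ : ℂ) * (X 0 * X 1 * X 2),
      C (3⁻¹ : ℂ) * (X 0 * X 1 * X 2) + C (2⁻¹ : ℂ) * (X 0 * X 4) -
        C (2⁻¹ : ℂ) * (X 2 * X 3) - X 5,
      C (12⁻¹ : ℂ) * (X 0 * X 1 ^ 2 * X 2) + X 3 * X 4 - X 1 * X 5]

/-- The ideal of the ten reduced Plücker relations of `sl(4)`: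
`U−XY+E`, `D−XV+A`, `B−UV+YA`, `XB−UD+AE`, `B−YD+EV`, `C−XW+UZ−A`,
`VC−DW+BZ`, `W−YZ+V`, `C−EZ+D`, `YC−EW+B`  (variables
`X,Y,Z,U,E,W,V,A,C,D,B` = indices `0,…,10`). -/
noncomputable def sl4RelationsIdeal : Ideal (MvPolynomial (Fin 11) ℂ) :=
  Ideal.span
    {X 3 - X 0 * X 1 + X 4,
     X 9 - X 0 * X 6 + X 7,
     X 10 - X 3 * X 6 + X 1 * X 7,
     X 0 * X 10 - X 3 * X 9 + X 7 * X 4,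
     X 10 - X 1 * X 9 + X 4 * X 6,
     X 8 - X 0 * X 5 + X 3 * X 2 - X 7,
     X 6 * X 8 - X 9 * X 5 + X 10 * X 2,
     X 5 - X 1 * X 2 + X 6,
     X 8 - X 4 * X 2 + X 9,
     X 1 * X 8 - X 4 * X 5 + X 10}

/-- The inverse substitution. -/
noncomputable def psiSl4 : MvPolynomial (Fin 6) ℂ →ₐ[ℂ] MvPolynomial (Fin 11) ℂ :=
  MvPolynomial.aeval
    ![X 0, X 1, X 2,
      X 3 - C (2⁻¹ : ℂ) * (X 0 * X 1),
      X 6 - C (2⁻¹ : ℂ) * (X 1 * X 2),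
      X 7 - C (2⁻¹ : ℂ) * (X 0 * (X 6 - C (2⁻¹ : ℂ) * (X 1 * X 2)))
        - C (2⁻¹ : ℂ) * (X 2 * (X 3 - C (2⁻¹ : ℂ) * (X 0 * X 1)))
        - C (6⁻¹ : ℂ) * (X 0 * X 1 * X 2)]

lemma sl4_consts (n : ℕ) : ∃ t : MvPolynomial (Fin n) ℂ, 12 * t = 1 ∧
    (C (2⁻¹ : ℂ) : MvPolynomial (Fin n) ℂ) = 6 * t ∧
    (C (3⁻¹ : ℂ) : MvPolynomial (Fin n) ℂ) = 4 * t ∧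
    (C (6⁻¹ : ℂ) : MvPolynomial (Fin n) ℂ) = 2 * t ∧
    (C (12⁻¹ : ℂ) : MvPolynomial (Fin n) ℂ) = t := by
  have h (k : ℕ) : (k : MvPolynomial (Fin n) ℂ) = C (k : ℂ) := (map_natCast C k).symm
  refine ⟨C (12⁻¹ : ℂ), ?_, ?_, ?_, ?_, rfl⟩
  · have := h 12
    push_cast at this
    rw [this, ← C_mul, ← C_1]; norm_num
  · have := h 6
    push_cast at this
    rw [this, ← C_mul]; norm_num
  · have := h 4
    push_cast at this
    rw [this, ← C_mul]; norm_num
  · have := h 2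
    push_cast at this
    rw [this, ← C_mul]; norm_num

lemma phi_psi_sl4 : phiSl4.comp psiSl4 = AlgHom.id ℂ _ := by
  obtain ⟨t, ht, h2, h3, h6, h12⟩ := sl4_consts 6
  apply MvPolynomial.algHom_ext
  intro i
  fin_cases i <;> simp [phiSl4, psiSl4, algHom_C, algebraMap_eq] <;> simp only [h2, h3, h6, h12] <;> grind

lemma sl4_le_ker : sl4RelationsIdeal ≤ RingHom.ker phiSl4.toRingHom := by
  obtain ⟨t, ht, h2, h3, h6, h12⟩ := sl4_consts 6
  rw [sl4RelationsIdeal, Ideal.span_le]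
  intro p hp
  simp only [Set.mem_insert_iff, Set.mem_singleton_iff] at hp
  simp only [SetLike.mem_coe, RingHom.mem_ker]
  rcases hp with rfl | rfl | rfl | rfl | rfl | rfl | rfl | rfl | rfl | rfl <;>
    simp [phiSl4] <;> simp only [h2, h3, h6, h12] <;> grind

lemma psi_phi_sl4 :
    (Ideal.Quotient.mkₐ ℂ sl4RelationsIdeal).comp (psiSl4.comp phiSl4) =
      Ideal.Quotient.mkₐ ℂ sl4RelationsIdeal := by
  obtain ⟨t, ht, h2, h3, h6, h12⟩ := sl4_consts 11
  have rel1 : X 3 - X 0 * X 1 + X 4 ∈ sl4RelationsIdeal :=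
    Ideal.subset_span (by simp)
  have rel2 : X 9 - X 0 * X 6 + X 7 ∈ sl4RelationsIdeal :=
    Ideal.subset_span (by simp)
  have rel3 : X 10 - X 3 * X 6 + X 1 * X 7 ∈ sl4RelationsIdeal :=
    Ideal.subset_span (by simp)
  have rel4 : X 5 - X 1 * X 2 + X 6 ∈ sl4RelationsIdeal :=
    Ideal.subset_span (by simp)
  have rel5 : X 8 - X 4 * X 2 + X 9 ∈ sl4RelationsIdeal :=
    Ideal.subset_span (by simp)
  rw [← Ideal.Quotient.eq_zero_iff_mem] at rel1 rel2 rel3 rel4 rel5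
  have ht' := congrArg (Ideal.Quotient.mk sl4RelationsIdeal) ht
  simp only [map_add, map_sub, map_mul, map_one, map_ofNat] at rel1 rel2 rel3 rel4 rel5 ht'
  apply MvPolynomial.algHom_ext
  intro i
  fin_cases i <;> simp [phiSl4, psiSl4, algHom_C, algebraMap_eq] <;>
    simp only [h2, h3, h6, h12, map_add, map_sub, map_mul, map_one, map_ofNat] <;> grind

/-- `φ` is surjective with kernel the ideal of the ten relations;
consequently the quotient is isomorphic as a `ℂ`-algebra to the polynomial
ring `ℂ[x,y,z,u,v,w]` in six variables. -/
theorem sl4_reduced_shape_algebra_presentation :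
    Function.Surjective phiSl4 ∧
    RingHom.ker phiSl4.toRingHom = sl4RelationsIdeal ∧
    Nonempty ((MvPolynomial (Fin 11) ℂ ⧸ sl4RelationsIdeal) ≃ₐ[ℂ]
      MvPolynomial (Fin 6) ℂ) := by
  have hs : Function.Surjective phiSl4 := fun p =>
    ⟨psiSl4 p, DFunLike.congr_fun phi_psi_sl4 p⟩
  have hk : RingHom.ker phiSl4.toRingHom = sl4RelationsIdeal := by
    refine le_antisymm (fun p hp => ?_) sl4_le_ker
    have h := DFunLike.congr_fun psi_phi_sl4 p
    have hp' : phiSl4 p = 0 := hp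
    simp only [AlgHom.comp_apply, hp', map_zero] at h
    exact Ideal.Quotient.eq_zero_iff_mem.mp h.symm
  refine ⟨hs, hk, ⟨?_⟩⟩
  exact (Ideal.quotientEquivAlgOfEq ℂ hk.symm).trans
    (Ideal.quotientKerAlgEquivOfSurjective hs)
end
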